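/- Commutation of counting quantifiers with conjunction and disjunction: let A, B be CPL formulas, a a name with a ∉ FN(A), and q a rational with 0 < q ≤ 1. Then for every finite name set X with FN(A) ∪ (FN(B) \ {a}) ⊆ X and a ∉ X: A ∧ C^q_a B ≡_X C^q_a(A ∧ B); A ∨ C^q_a B ≡_X C^q_a(A ∨ B); A ∧ D^q_a B ≡_X D^q_a(¬A ∨ B); and A ∨ D^q_a B ≡_X D^q_a(¬A ∧ B). -/

import Mathlib

open MeasureTheory

/-- The Cantor space `2^ω` of infinite binary sequences. -/
abbrev Cantor : Type := ℕ → Bool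

/-- Rational numbers in the unit interval `[0,1]`. -/
abbrev I01 : Type := (Set.Icc (0 : ℚ) 1)

/-- The value of a rational `q ∈ [0,1]` as an extended nonnegative real. -/
noncomputable def qq (q : I01) : ENNReal := ENNReal.ofReal (q.1 : ℝ)

/-- `μ` is the fair-coin Bernoulli (uniform) product measure on the Cantor space:
it is a probability measure giving each cylinder fixing the values on a finite set `s`
of coordinates the measure `2^{-|s|}`. -/
def IsCantorMeasure (μ : Measure Cantor) : Prop :=
  IsProbabilityMeasure μ ∧
    ∀ (s : Finset ℕ) (v : ℕ → Bool),
      μ {f : Cantor | ∀ i ∈ s, f i = v i} = (2 : ENNReal)⁻¹ ^ s.card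

/-- Valuations of the names in a finite name set `X`: the space `(2^ω)^X`. -/
abbrev Val (X : Finset ℕ) : Type := {a : ℕ // a ∈ X} → Cantor

/-- `combine f g` is the common extension `f + g` of valuations `f ∈ (2^ω)^X` and
`g ∈ (2^ω)^Y`: it agrees with `f` on `X` and with `g` on `Y` (when `X` and `Y` are
disjoint this is the `f + g` of the paper). -/
def combine {X Y : Finset ℕ} (f : Val X) (g : Val Y) : Val (X ∪ Y) :=
  fun a =>
    if h : a.1 ∈ Y then g ⟨a.1, h⟩
    else f ⟨a.1, (Finset.mem_union.mp a.2).resolve_right h⟩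

/-- The `f`-projection `Π_f(𝒳) = {g ∈ (2^ω)^Y | f + g ∈ 𝒳}` of a set
`𝒳 ⊆ (2^ω)^{X∪Y}` along `f ∈ (2^ω)^X`. -/
def proj {X Y : Finset ℕ} (f : Val X) (S : Set (Val (X ∪ Y))) : Set (Val Y) :=
  {g | combine f g ∈ S}

/-- The fair-coin Bernoulli (uniform) product measure on `(2^ω)^X`, obtained as the
pushforward of the Cantor measure `μ` along the (coordinate-separating) injection
determined by the pairing function: the coordinates `(a, i)` are i.i.d. fair coins. -/
noncomputable def cantorPi (μ : Measure Cantor) (X : Finset ℕ) : Measure (Val X) :=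
  Measure.map (fun (g : Cantor) (a : {x : ℕ // x ∈ X}) (i : ℕ) => g (Nat.pair a.1 i)) μ

/-- Named Boolean formulas `b ::= xᵢᵃ | ⊤ | ⊥ | ¬b | b ∧ c | b ∨ c`.
`NBF.var i a` is the named propositional variable `xᵢᵃ`. -/
inductive NBF : Type where
  | var : ℕ → ℕ → NBF
  | tt : NBF
  | ff : NBF
  | neg : NBF → NBF
  | conj : NBF → NBF → NBF
  | disj : NBF → NBF → NBF
deriving DecidableEq

/-- The set of (free) names occurring in a named Boolean formula. -/
def NBF.FN : NBF → Finset ℕ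
  | .var _ a => {a}
  | .tt => ∅
  | .ff => ∅
  | .neg b => b.FN
  | .conj b c => b.FN ∪ c.FN
  | .disj b c => b.FN ∪ c.FN

/-- The interpretation `⟦b⟧_X ⊆ (2^ω)^X` of a named Boolean formula with `FN(b) ⊆ X`. -/
def NBF.semN : NBF → (X : Finset ℕ) → Set (Val X)
  | .var i a, X => {f | ∀ h : a ∈ X, f ⟨a, h⟩ i = true}
  | .tt, _ => Set.univ
  | .ff, _ => ∅
  | .neg b, X => (b.semN X)ᶜ
  | .conj b c, X => b.semN X ∩ c.semN X
  | .disj b c, X => b.semN X ∪ c.semN X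

/-- The disjunction `⋁_{i<k} c i` of a finite family of named Boolean formulas. -/
def NBF.bigDisj {k : ℕ} (c : Fin k → NBF) : NBF :=
  (List.ofFn c).foldr NBF.disj NBF.ff

/-- Formulas of (multivariate) counting propositional logic CPL:
`A ::= i_a | ¬A | A ∧ B | A ∨ B | C^q_a A | D^q_a A`, with `i ∈ ℕ`, `a` a name and
`q` a rational in `[0,1]`.  `CPL.atom i a` is the named atom `i_a`, and
`CPL.cnt q a A` (resp. `CPL.dnt q a A`) is `C^q_a A` (resp. `D^q_a A`). -/
inductive CPL : Type where
  | atom : ℕ → ℕ → CPL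
  | neg : CPL → CPL
  | conj : CPL → CPL → CPL
  | disj : CPL → CPL → CPL
  | cnt : I01 → ℕ → CPL → CPL
  | dnt : I01 → ℕ → CPL → CPL
deriving DecidableEq

/-- The set of free names of a CPL formula; `a` is bound in `C^q_a A` and `D^q_a A`. -/
def CPL.FN : CPL → Finset ℕ
  | .atom _ a => {a}
  | .neg A => A.FN
  | .conj A B => A.FN ∪ B.FN
  | .disj A B => A.FN ∪ B.FN
  | .cnt _ a A => A.FN \ {a}
  | .dnt _ a A => A.FN \ {a}

/-- The interpretation `⟦A⟧_X ⊆ (2^ω)^X` of a CPL formula `A` with `FN(A) ⊆ X`: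
`⟦C^q_a A⟧_X = {f | μ(Π_f(⟦A⟧_{X∪{a}})) ≥ q}` and
`⟦D^q_a A⟧_X = {f | μ(Π_f(⟦A⟧_{X∪{a}})) < q}`. -/
noncomputable def CPL.semN (μ : Measure Cantor) : CPL → (X : Finset ℕ) → Set (Val X)
  | .atom i a, X => {f | ∀ h : a ∈ X, f ⟨a, h⟩ i = true}
  | .neg A, X => (CPL.semN μ A X)ᶜ
  | .conj A B, X => CPL.semN μ A X ∩ CPL.semN μ B X
  | .disj A B, X => CPL.semN μ A X ∪ CPL.semN μ B X
  | .cnt q a A, X =>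
      {f | qq q ≤ cantorPi μ {a} (proj (Y := {a}) f (CPL.semN μ A (X ∪ {a})))}
  | .dnt q a A, X =>
      {f | cantorPi μ {a} (proj (Y := {a}) f (CPL.semN μ A (X ∪ {a}))) < qq q}

lemma CPL.semN_congr (μ : Measure Cantor) (A : CPL) : ∀ (X X' : Finset ℕ) (f : Val X) (f' : Val X'),
    A.FN ⊆ X → A.FN ⊆ X' →
    (∀ c (_ : c ∈ A.FN) (h : c ∈ X) (h' : c ∈ X'), f ⟨c, h⟩ = f' ⟨c, h'⟩) →
    (f ∈ CPL.semN μ A X ↔ f' ∈ CPL.semN μ A X') := by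
  have key : ∀ (A : CPL) (a : ℕ), (∀ (X X' : Finset ℕ) (f : Val X) (f' : Val X'),
      A.FN ⊆ X → A.FN ⊆ X' →
      (∀ c (_ : c ∈ A.FN) (h : c ∈ X) (h' : c ∈ X'), f ⟨c, h⟩ = f' ⟨c, h'⟩) →
      (f ∈ CPL.semN μ A X ↔ f' ∈ CPL.semN μ A X')) →
      ∀ (X X' : Finset ℕ) (f : Val X) (f' : Val X'),
      A.FN \ {a} ⊆ X → A.FN \ {a} ⊆ X' →
      (∀ c (_ : c ∈ A.FN \ {a}) (h : c ∈ X) (h' : c ∈ X'), f ⟨c, h⟩ = f' ⟨c, h'⟩) →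
      proj (Y := {a}) f (CPL.semN μ A (X ∪ {a})) =
        proj (Y := {a}) f' (CPL.semN μ A (X' ∪ {a})) := by
    intro A a ih X X' f f' h1 h2 h
    ext g
    refine ih _ _ (combine f g) (combine f' g) ?_ ?_ ?_
    · intro c hc
      by_cases hca : c = a
      · simp [hca]
      · exact Finset.mem_union_left _ (h1 (by simp [hc, hca]))
    · intro c hc
      by_cases hca : c = a
      · simp [hca]
      · exact Finset.mem_union_left _ (h2 (by simp [hc, hca]))
    · intro c hc hc1 hc2
      unfold combine
      by_cases hca : c ∈ ({a} : Finset ℕ)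
      · simp only [hca, dif_pos]
      · simp only [hca, dif_neg, not_false_iff]
        exact h c (Finset.mem_sdiff.mpr ⟨hc, hca⟩) _ _
  induction A with
  | atom i a =>
    intro X X' f f' h1 h2 h
    have k1 : a ∈ X := h1 (by simp [CPL.FN])
    have k2 : a ∈ X' := h2 (by simp [CPL.FN])
    have := h a (by simp [CPL.FN]) k1 k2
    simp [CPL.semN, k1, k2, this]
  | neg A ih =>
    intro X X' f f' h1 h2 h
    exact not_congr (ih X X' f f' h1 h2 h)
  | conj A B ihA ihB =>
    intro X X' f f' h1 h2 h
    simp only [CPL.FN] at h1 h2 h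
    rw [Finset.union_subset_iff] at h1 h2
    exact and_congr
      (ihA X X' f f' h1.1 h2.1 fun c hc => h c (Finset.mem_union_left _ hc))
      (ihB X X' f f' h1.2 h2.2 fun c hc => h c (Finset.mem_union_right _ hc))
  | disj A B ihA ihB =>
    intro X X' f f' h1 h2 h
    simp only [CPL.FN] at h1 h2 h
    rw [Finset.union_subset_iff] at h1 h2
    exact or_congr
      (ihA X X' f f' h1.1 h2.1 fun c hc => h c (Finset.mem_union_left _ hc))
      (ihB X X' f f' h1.2 h2.2 fun c hc => h c (Finset.mem_union_right _ hc))
  | cnt q a A ih =>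
    intro X X' f f' h1 h2 h
    simp only [CPL.semN, Set.mem_ofPred_eq]
    rw [key A a ih X X' f f' h1 h2 h]
  | dnt q a A ih =>
    intro X X' f f' h1 h2 h
    simp only [CPL.semN, Set.mem_ofPred_eq]
    rw [key A a ih X X' f f' h1 h2 h]

lemma cantorPi_univ (μ : Measure Cantor) (hμ : IsCantorMeasure μ) (X : Finset ℕ) :
    cantorPi μ X Set.univ = 1 := by
  have := hμ.1
  unfold cantorPi
  rw [Measure.map_apply _ MeasurableSet.univ]
  · simp
  · exact measurable_pi_lambda _ fun a => measurable_pi_lambda _ fun i => measurable_pi_apply _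

/-- **Commutations.** Let `a ∉ FN(A)` and `0 < q ≤ 1`. Then for every
finite name set `X` with `FN(A) ∪ (FN(B) \ {a}) ⊆ X` and `a ∉ X`:
`A ∧ C^q_a B ≡_X C^q_a(A ∧ B)`, `A ∨ C^q_a B ≡_X C^q_a(A ∨ B)`,
`A ∧ D^q_a B ≡_X D^q_a(¬A ∨ B)`, and `A ∨ D^q_a B ≡_X D^q_a(¬A ∧ B)`. -/
theorem cpl_commutations
    (μ : Measure Cantor) (hμ : IsCantorMeasure μ)
    (A B : CPL) (a : ℕ) (q : I01) (hq : 0 < q.1) (haA : a ∉ A.FN)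
    (X : Finset ℕ) (hX : A.FN ∪ (B.FN \ {a}) ⊆ X) (haX : a ∉ X) :
    CPL.semN μ (.conj A (.cnt q a B)) X = CPL.semN μ (.cnt q a (.conj A B)) X ∧
    CPL.semN μ (.disj A (.cnt q a B)) X = CPL.semN μ (.cnt q a (.disj A B)) X ∧
    CPL.semN μ (.conj A (.dnt q a B)) X = CPL.semN μ (.dnt q a (.disj (.neg A) B)) X ∧
    CPL.semN μ (.disj A (.dnt q a B)) X = CPL.semN μ (.dnt q a (.conj (.neg A) B)) X := by
  have hA : ∀ (f : Val X) (g : Val {a}),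
      combine f g ∈ CPL.semN μ A (X ∪ {a}) ↔ f ∈ CPL.semN μ A X := by
    intro f g
    have h1 : A.FN ⊆ X := (Finset.union_subset_iff.mp hX).1
    refine CPL.semN_congr μ A _ _ _ _ (h1.trans Finset.subset_union_left) h1 ?_
    intro c hc _ _
    have hca : c ∉ ({a} : Finset ℕ) := by
      rw [Finset.mem_singleton]; rintro rfl; exact haA hc
    simp only [combine, hca, dif_neg, not_false_iff]
  have h0 : 0 < qq q := by
    unfold qq; rw [ENNReal.ofReal_pos]; exact_mod_cast hq
  have h1 : qq q ≤ 1 := by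
    unfold qq; rw [ENNReal.ofReal_le_one]; exact_mod_cast q.2.2
  have hu := cantorPi_univ μ hμ {a}
  refine ⟨?_, ?_, ?_, ?_⟩ <;> ext f <;>
    simp only [CPL.semN, proj, Set.mem_inter_iff, Set.mem_union, Set.mem_ofPred_eq,
      Set.mem_compl_iff, hA] <;>
    by_cases hf : f ∈ CPL.semN μ A X <;> simp [hf, hu, h0, h0.ne', h1]
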